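/- Let q be a prime power and let P be a closed point of degree 3 of P² over F_q not contained in any F_q-rational line, given by a point p ∈ P²(F_{q³}) whose Frobenius orbit {p, φ(p), φ²(p)} has exactly 3 elements, these three points being non-collinear. Then for every nonzero homogeneous polynomial f ∈ F_q[x,y,z] of degree 3 vanishing at p, the number of points [a:b:c] ∈ P²(F_q) with f(a,b,c) = 0 is at most 2q + 2. -/

import Mathlib

open MvPolynomial

noncomputable section

/-!
Let `C` be a plane curve of degree `d + 1` over `F_q`. Suppose first that `C` contains no
`F_q`-rational line, and let `a` be a rational point of `C`. Each of the `q + 1` rational lines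
through `a` meets `C` in at most `d` further points, and at least one of them (the tangent at `a`,
or any line if `a` is singular) in at most `d - 1`. As these lines cover the plane, `C` has at most
`1 + (q + 1) d - 1 = d (q + 1)` rational points.

A rational line contained in `C` contributes at most `q + 1` points and can be split off, which
lowers the degree by one. Since the coordinates of `v` are linearly independent over `F_q`, no
rational line passes through `v`, so the residual curve still does; hence the induction on `d`
never ends in a line.
-/

open scoped LinearAlgebra.Projectivization

section LineRestriction

variable {σ R : Type*} [CommSemiring R] {a u : σ → R} {f : MvPolynomial σ R} {d : ℕ}

/-- The restriction of a polynomial to the line through `u` with direction `a`, as a polynomial in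
the parameter `t` of `t ↦ t a + u`. For a homogeneous polynomial this is its dehomogenized
restriction to the projective line joining `a` and `u`, with `a` placed at infinity. -/
def lineRestriction (a u : σ → R) : MvPolynomial σ R →ₐ[R] Polynomial R :=
  aeval fun i => Polynomial.C (a i) * Polynomial.X + Polynomial.C (u i)

lemma lineRestriction_X (i : σ) :
    lineRestriction a u (X i) = Polynomial.C (a i) * Polynomial.X + Polynomial.C (u i) :=
  aeval_X _ i

lemma eval_lineRestriction (t : R) :
    (lineRestriction a u f).eval t = eval (t • a + u) f := by
  have : (Polynomial.aeval t).comp (lineRestriction a u) = aeval (t • a + u) := by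
    ext i
    simp [lineRestriction_X, mul_comm (a i)]
  exact DFunLike.congr_fun this f

lemma coeff_zero_lineRestriction : (lineRestriction a u f).coeff 0 = eval u f := by
  simp [Polynomial.coeff_zero_eq_eval_zero, eval_lineRestriction]

/-- The differential of `f` at the point `u`, as a linear form on tangent vectors. -/
def differentialAt [Fintype σ] (u : σ → R) (f : MvPolynomial σ R) : (σ → R) →ₗ[R] R :=
  Fintype.linearCombination R fun i => eval u (pderiv i f)

lemma coeff_one_lineRestriction [Fintype σ] :
    (lineRestriction a u f).coeff 1 = differentialAt u f a := by
  classical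
  simp only [differentialAt, Fintype.linearCombination_apply, smul_eq_mul]
  induction f using MvPolynomial.induction_on with
  | C r => simp [algHom_C, Polynomial.algebraMap_eq]
  | add f g hf hg =>
    simp only [map_add, Polynomial.coeff_add, hf, hg, mul_add, Finset.sum_add_distrib]
  | mul_X f j hf =>
    have hprod : (lineRestriction a u (f * X j)).coeff 1 =
        eval u f * a j + (lineRestriction a u f).coeff 1 * u j := by
      simp [lineRestriction_X, Polynomial.mul_coeff_one, coeff_zero_lineRestriction]
    have hpderiv (i : σ) : a i * eval u (pderiv i (f * X j)) =
        (Pi.single j (eval u f * a j) : σ → R) i + a i * eval u (pderiv i f) * u j := by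
      rcases eq_or_ne i j with rfl | hij
      · simp only [Derivation.leibniz, pderiv_X, Pi.single_eq_same, smul_eq_mul, mul_one, map_add,
          map_mul, eval_X]
        ring
      · simp only [Derivation.leibniz, pderiv_X_of_ne hij.symm, smul_eq_mul, mul_zero, zero_add,
          map_mul, eval_X, Pi.single_eq_of_ne hij]
        ring
    simp only [hprod, hpderiv, hf, Finset.sum_add_distrib, Finset.sum_mul, Finset.sum_pi_single',
      Finset.mem_univ, if_true]

lemma homogenize_lineRestriction (hf : f.IsHomogeneous d) :
    (lineRestriction a u f).homogenize d = aeval (fun i => C (a i) * X 0 + C (u i) * X 1) f := by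
  refine Polynomial.homogenize_eq_of_isHomogeneous ?_ ?_
  · simpa only [one_mul] using hf.aeval (n := 1) _ fun i =>
      (isHomogeneous_C_mul_X _ _).add (isHomogeneous_C_mul_X _ _)
  · rw [lineRestriction, comp_aeval_apply]
    simp [Polynomial.algebraMap_eq]

lemma aeval_homogenize_lineRestriction (hf : f.IsHomogeneous d) {A : Type*} [CommSemiring A]
    [Algebra R A] (s t : A) :
    aeval ![s, t] ((lineRestriction a u f).homogenize d) =
      aeval (fun i => algebraMap R A (a i) * s + algebraMap R A (u i) * t) f := by
  rw [homogenize_lineRestriction hf, comp_aeval_apply]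
  simp

lemma coeff_aeval_one_X_homogenize (p : Polynomial R) (k l : ℕ) :
    (aeval ![1, Polynomial.X] (p.homogenize (k + l))).coeff l = p.coeff k := by
  simp only [Polynomial.homogenize, map_sum, Polynomial.finsetSum_coeff]
  rw [Finset.sum_eq_single_of_mem (k, l) (by simp)]
  · simp [aeval_monomial, Finsupp.prod_fintype, Polynomial.algebraMap_eq]
  · intro m hm hne
    rw [Finset.HasAntidiagonal.mem_antidiagonal] at hm
    have hl : l ≠ m.2 := fun h => hne <| Prod.ext (by lia) h.symm
    simp [aeval_monomial, Finsupp.prod_fintype, Polynomial.algebraMap_eq, Polynomial.coeff_X_pow,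
      hl]

lemma coeff_lineRestriction_swap {k l : ℕ} (hf : f.IsHomogeneous (k + l)) :
    (lineRestriction a u f).coeff k = (lineRestriction u a f).coeff l := by
  have h : lineRestriction u a f =
      aeval ![1, Polynomial.X] ((lineRestriction a u f).homogenize (k + l)) := by
    rw [aeval_homogenize_lineRestriction hf]
    simp [lineRestriction, Polynomial.algebraMap_eq, add_comm]
  rw [h, coeff_aeval_one_X_homogenize]

lemma natDegree_lineRestriction_le_totalDegree :
    (lineRestriction a u f).natDegree ≤ f.totalDegree :=
  (aeval_natDegree_le f le_rfl _ fun _ => Polynomial.natDegree_linear_le).trans_eq (mul_one _)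

lemma natDegree_lineRestriction_le (hf : f.IsHomogeneous (d + 1)) (ha : eval a f = 0) :
    (lineRestriction a u f).natDegree ≤ d := by
  have hle : (lineRestriction a u f).natDegree ≤ d + 1 :=
    natDegree_lineRestriction_le_totalDegree.trans hf.totalDegree_le
  have htop : (lineRestriction a u f).coeff (d + 1) = 0 := by
    rw [coeff_lineRestriction_swap (l := 0) hf, coeff_zero_lineRestriction, ha]
  exact Polynomial.natDegree_le_pred hle htop

lemma natDegree_lineRestriction_lt [Fintype σ] (hf : f.IsHomogeneous (d + 1)) (ha : eval a f = 0)
    (hu : differentialAt a f u = 0) (h0 : lineRestriction a u f ≠ 0) :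
    (lineRestriction a u f).natDegree < d := by
  refine (natDegree_lineRestriction_le hf ha).lt_of_ne fun hd => h0 ?_
  rw [← Polynomial.leadingCoeff_eq_zero, Polynomial.leadingCoeff, hd,
    coeff_lineRestriction_swap hf, coeff_one_lineRestriction, hu]

end LineRestriction

section LinearForm

variable {σ R : Type*} [CommRing R] {l : MvPolynomial σ R}

lemma exists_eq_sum_C_mul_X [Fintype σ] (hl : l.IsHomogeneous 1) :
    ∃ c : σ → R, l = ∑ i, C (c i) * X i := by
  rw [← mem_homogeneousSubmodule, homogeneousSubmodule_one_eq_span_X,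
    Submodule.mem_span_range_iff_exists_fun] at hl
  obtain ⟨c, rfl⟩ := hl
  exact ⟨c, by simp only [smul_eq_C_mul]⟩

lemma aeval_ne_zero_of_linearIndependent {A : Type*} [CommRing A] [Algebra R A] [Finite σ]
    {v : σ → A} (hv : LinearIndependent R v) (hl : l.IsHomogeneous 1) (hl0 : l ≠ 0) :
    aeval v l ≠ 0 := by
  cases nonempty_fintype σ
  obtain ⟨c, rfl⟩ := exists_eq_sum_C_mul_X hl
  contrapose! hl0
  have hc : ∀ i, c i = 0 :=
    Fintype.linearIndependent_iff.mp hv c (by simpa [Algebra.smul_def] using hl0)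
  simp [hc]

lemma isHomogeneous_right_of_mul [IsDomain R] {f g : MvPolynomial σ R} {m n : ℕ}
    (hf : f.IsHomogeneous m) (hf0 : f ≠ 0) (hfg : (f * g).IsHomogeneous (m + n)) :
    g.IsHomogeneous n := by
  let _ : GradedAlgebra (homogeneousSubmodule σ R) := MvPolynomial.gradedAlgebra
  have h := DirectSum.coe_decompose_mul_add_of_left_mem (homogeneousSubmodule σ R)
    (i := m) (j := n) (b := g) hf
  rw [DirectSum.decompose_of_mem_same _ hfg] at h
  rw [mul_left_cancel₀ hf0 h]
  exact (DirectSum.decompose (homogeneousSubmodule σ R) g n).2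

lemma dvd_map_sub_map {A : Type*} [CommRing A] [Algebra R A] {φ ψ : MvPolynomial σ R →ₐ[R] A}
    {b : A} (h : ∀ i, b ∣ φ (X i) - ψ (X i)) (f : MvPolynomial σ R) : b ∣ φ f - ψ f := by
  let π := Ideal.Quotient.mkₐ R (Ideal.span {b})
  have hπ : π.comp φ = π.comp ψ := by
    ext i
    simpa [π, Ideal.Quotient.eq, Ideal.mem_span_singleton] using h i
  simpa [π, Ideal.Quotient.eq, Ideal.mem_span_singleton] using DFunLike.congr_fun hπ f

lemma exists_linearForms_of_linearIndependent {F : Type*} [Field F] {n : ℕ} {b : Fin n → Fin n → F}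
    (hb : LinearIndependent F b) : ∃ α : Fin n → MvPolynomial (Fin n) F,
      (∀ j, (α j).IsHomogeneous 1) ∧ ∀ i, X i = ∑ j, C (b j i) * α j := by
  let M : Matrix (Fin n) (Fin n) F := (Matrix.of b).transpose
  have hM : M * M⁻¹ = 1 := by
    refine Matrix.mul_nonsing_inv M ?_
    rw [Matrix.det_transpose, ← Matrix.isUnit_iff_isUnit_det]
    exact Matrix.linearIndependent_rows_iff_isUnit.mp hb
  refine ⟨M⁻¹.toMvPolynomial, M⁻¹.toMvPolynomial_isHomogeneous, fun i => ?_⟩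
  have h := Matrix.toMvPolynomial_mul M M⁻¹ i
  rw [hM, Matrix.toMvPolynomial_one] at h
  rw [h]
  simp [Matrix.toMvPolynomial, M, ← C_mul_X_eq_monomial]

lemma exists_linear_dvd_of_lineRestriction_eq_zero {F : Type*} [Field F] {a u : Fin 3 → F}
    {f : MvPolynomial (Fin 3) F} {d : ℕ} (hau : LinearIndependent F ![a, u])
    (hf : f.IsHomogeneous d) (h0 : lineRestriction a u f = 0) :
    ∃ l : MvPolynomial (Fin 3) F, l.IsHomogeneous 1 ∧ l ∣ f := by
  obtain ⟨w, hw⟩ := exists_linearIndependent_snoc_of_lt_finrank hau (by simp)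
  obtain ⟨α, hα, hX⟩ := exists_linearForms_of_linearIndependent hw
  refine ⟨α 2, hα 2, ?_⟩
  have hline : aeval (fun i => C (a i) * α 0 + C (u i) * α 1) f = 0 := by
    have := aeval_homogenize_lineRestriction (a := a) (u := u) hf (α 0) (α 1)
    simpa [h0, algebraMap_eq] using this.symm
  -- Modulo `α 2` every coordinate equals its restriction to the line, on which `f` vanishes.
  have hdvd := dvd_map_sub_map (φ := AlgHom.id F _)
    (ψ := aeval fun i => C (a i) * α 0 + C (u i) * α 1) (b := α 2) (fun i => ?_) f
  · simpa only [AlgHom.id_apply, hline, sub_zero] using hdvd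
  · refine ⟨C (w i), ?_⟩
    rw [AlgHom.id_apply, aeval_X, hX i, Fin.sum_univ_three]
    change C (a i) * α 0 + C (u i) * α 1 + C (w i) * α 2 - _ = _
    ring

end LinearForm

section Frobenius

variable {F E : Type*} [Field F] [Field E] [Algebra F E]

lemma linearIndependent_of_algHom {ι : Type*} [Finite ι] {v : ι → E} (τ : ι → E →ₐ[F] E)
    (h : LinearIndependent E fun j i => τ j (v i)) : LinearIndependent F v := by
  classical
  cases nonempty_fintype ι
  refine Fintype.linearIndependent_iff.mpr fun c hc => ?_
  let M : Matrix ι ι E := .of fun j i => τ j (v i)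
  have hM : M.mulVec (algebraMap F E ∘ c) = M.mulVec 0 := by
    ext j
    simpa [M, Matrix.mulVec, dotProduct, Algebra.smul_def, mul_comm] using congrArg (τ j) hc
  have hc0 := Matrix.mulVec_injective_iff_isUnit.mpr
    (Matrix.linearIndependent_rows_iff_isUnit.mp h) hM
  exact fun i => by simpa using congrFun hc0 i

lemma linearIndependent_of_frobenius [Fintype F] {n : ℕ} {v : Fin n → E}
    (h : LinearIndependent E fun (j : Fin n) i => v i ^ Fintype.card F ^ (j : ℕ)) :
    LinearIndependent F v := by
  refine linearIndependent_of_algHom (fun j => FiniteField.frobeniusAlgHom F E ^ (j : ℕ)) ?_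
  simpa [AlgHom.coe_pow, FiniteField.coe_frobeniusAlgHom, pow_iterate] using h

end Frobenius

section Projectivization

variable {F V : Type*} [Field F] [AddCommGroup V] [Module F V]

lemma ncard_setOf_rep_mem (U : Submodule F V) :
    {x : ℙ F V | x.rep ∈ U}.ncard = Nat.card (ℙ F U) := by
  have hrange : {x : ℙ F V | x.rep ∈ U} =
      Set.range (Projectivization.map U.subtype U.subtype_injective) := by
    ext x
    constructor
    · exact fun hx => ⟨.mk F ⟨x.rep, hx⟩ (by simpa using x.rep_nonzero), x.mk_rep⟩
    · rintro ⟨y, rfl⟩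
      induction y using Projectivization.ind with
      | h w hw =>
        obtain ⟨c, hc⟩ := Projectivization.exists_smul_eq_mk_rep F (w : V) (by simpa using hw)
        change (Projectivization.mk F (w : V) _).rep ∈ U
        exact hc ▸ U.smul_mem (c : F) w.2
  rw [hrange, ← Nat.card_coe_set_eq]
  exact Nat.card_range_of_injective (Projectivization.map_injective _ U.subtype_injective)

lemma exists_rep_mem_ker (hV : 1 < Module.finrank F V) (L : V →ₗ[F] F) :
    ∃ y : ℙ F V, L y.rep = 0 := by
  have : FiniteDimensional F V := Module.finite_of_finrank_pos (by lia)
  obtain ⟨w, hw, hw0⟩ := Submodule.exists_mem_ne_zero_of_ne_bot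
    (LinearMap.ker_ne_bot_of_finrank_lt (f := L) (by simpa using hV))
  obtain ⟨c, hc⟩ := Projectivization.exists_smul_eq_mk_rep F w hw0
  exact ⟨.mk F w hw0, by simp [← hc, Units.smul_def, LinearMap.mem_ker.mp hw]⟩

variable {a : V} {U : Submodule F V}

lemma linearIndependent_pair_rep (ha : a ≠ 0) (hU : IsCompl (F ∙ a) U) (y : ℙ F U) :
    LinearIndependent F ![a, (y.rep : V)] := by
  refine (LinearIndependent.pair_iff' ha).mpr fun c hc => y.rep_nonzero (Subtype.ext ?_)
  exact Submodule.disjoint_def.mp hU.disjoint _ (Submodule.mem_span_singleton.mpr ⟨c, hc⟩) y.rep.2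

lemma smul_add_rep_ne_zero (ha : a ≠ 0) (hU : IsCompl (F ∙ a) U) (t : F) (y : ℙ F U) :
    t • a + (y.rep : V) ≠ 0 := fun h =>
  one_ne_zero (LinearIndependent.pair_iff.mp (linearIndependent_pair_rep ha hU y) t 1
    (by rwa [one_smul])).2

lemma eq_mk_or_exists_eq_mk_smul_add_rep (ha : a ≠ 0) (hU : IsCompl (F ∙ a) U) (x : ℙ F V) :
    x = .mk F a ha ∨ ∃ (y : ℙ F U) (t : F), x = .mk F _ (smul_add_rep_ne_zero ha hU t y) := by
  obtain ⟨_, hs, w, hw, hx⟩ := Submodule.mem_sup.mp (hU.sup_eq_top ▸ Submodule.mem_top (x := x.rep))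
  obtain ⟨s, rfl⟩ := Submodule.mem_span_singleton.mp hs
  rw [← x.mk_rep]
  simp only [Projectivization.mk_eq_mk_iff']
  by_cases hw0 : w = 0
  · exact .inl ⟨s, by simpa [hw0] using hx⟩
  · have hw0' : (⟨w, hw⟩ : U) ≠ 0 := by simpa using hw0
    obtain ⟨c, hc⟩ := Projectivization.exists_smul_eq_mk_rep F _ hw0'
    refine .inr ⟨.mk F _ hw0', c * s, (c : F)⁻¹, ?_⟩
    simp [← hx, ← hc, Units.smul_def, smul_smul]

end Projectivization

section RationalZeros

variable {σ F : Type*} [Field F] {f g : MvPolynomial σ F} {d : ℕ}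

/-- The `F`-rational points of the projective zero locus of `f`. Membership is tested on the chosen
representative `x.rep`, so it is independent of that choice only for homogeneous `f`. -/
def rationalZeros (f : MvPolynomial σ F) : Set (ℙ F (σ → F)) :=
  {x | eval x.rep f = 0}

lemma rationalZeros_mul : rationalZeros (f * g) = rationalZeros f ∪ rationalZeros g := by
  ext x
  simp [rationalZeros]

lemma eval_smul_of_isHomogeneous {R : Type*} [CommSemiring R] {f : MvPolynomial σ R}
    (hf : f.IsHomogeneous d) (c : R) (x : σ → R) : eval (c • x) f = c ^ d * eval x f := by
  simp only [eval_eq, Finset.mul_sum]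
  refine Finset.sum_congr rfl fun m hm => ?_
  simp only [Pi.smul_apply, smul_eq_mul, mul_pow, Finset.prod_mul_distrib,
    Finset.prod_pow_eq_pow_sum, ← hf.degree_eq_sum_deg_support hm]
  ring

lemma mk_mem_rationalZeros_iff (hf : f.IsHomogeneous d) {w : σ → F} (hw : w ≠ 0) :
    .mk F w hw ∈ rationalZeros f ↔ eval w f = 0 := by
  obtain ⟨c, hc⟩ := Projectivization.exists_smul_eq_mk_rep F w hw
  simp [rationalZeros, ← hc, Units.smul_def, eval_smul_of_isHomogeneous hf]

lemma ncard_rationalZeros_le_sum_natDegree {a : σ → F} {U : Submodule F (σ → F)} [Fintype (ℙ F U)]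
    (hf : f.IsHomogeneous d) (ha : a ≠ 0) (hU : IsCompl (F ∙ a) U)
    (h0 : ∀ y : ℙ F U, lineRestriction a y.rep f ≠ 0) :
    (rationalZeros f).ncard ≤ ∑ y : ℙ F U, (lineRestriction a y.rep f).natDegree + 1 := by
  classical
  let zerosOn (y : ℙ F U) : Finset (ℙ F (σ → F)) :=
    (lineRestriction a y.rep f).roots.toFinset.image
      fun t => .mk F _ (smul_add_rep_ne_zero ha hU t y)
  have hcover : rationalZeros f ⊆ ↑(insert (.mk F a ha) (Finset.univ.biUnion zerosOn)) := by
    intro x hx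
    rw [Finset.mem_coe, Finset.mem_insert]
    refine (eq_mk_or_exists_eq_mk_smul_add_rep ha hU x).imp_right ?_
    rintro ⟨y, t, rfl⟩
    rw [mk_mem_rationalZeros_iff hf, ← eval_lineRestriction] at hx
    exact Finset.mem_biUnion.mpr ⟨y, Finset.mem_univ y, Finset.mem_image_of_mem _ <|
      Multiset.mem_toFinset.mpr <| Polynomial.mem_roots'.mpr ⟨h0 y, hx⟩⟩
  have hcard (y : ℙ F U) : (zerosOn y).card ≤ (lineRestriction a y.rep f).natDegree :=
    Finset.card_image_le.trans <| (Multiset.toFinset_card_le _).trans <| Polynomial.card_roots' _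
  calc (rationalZeros f).ncard
      ≤ (insert (Projectivization.mk F a ha) (Finset.univ.biUnion zerosOn)).card := by
        simpa only [Set.ncard_coe_finset] using Set.ncard_le_ncard hcover (Finset.finite_toSet _)
    _ ≤ (Finset.univ.biUnion zerosOn).card + 1 := Finset.card_insert_le _ _
    _ ≤ ∑ y, (zerosOn y).card + 1 := by gcongr; exact Finset.card_biUnion_le
    _ ≤ ∑ y : ℙ F U, (lineRestriction a y.rep f).natDegree + 1 := by gcongr; exact hcard _

end RationalZeros

section PlaneCurve

variable {F : Type*} [Field F] [Fintype F] {f l : MvPolynomial (Fin 3) F} {d : ℕ}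

lemma ncard_rationalZeros_le_of_isHomogeneous_one (hl : l.IsHomogeneous 1) (hl0 : l ≠ 0) :
    (rationalZeros l).ncard ≤ Fintype.card F + 1 := by
  obtain ⟨c, rfl⟩ := exists_eq_sum_C_mul_X hl
  let L : (Fin 3 → F) →ₗ[F] F := Fintype.linearCombination F c
  have hL : L ≠ 0 := by
    contrapose! hl0
    have hc (i : Fin 3) : c i = 0 := by simpa [L] using LinearMap.congr_fun hl0 (Pi.single i 1)
    simp [hc]
  have hzeros : rationalZeros (∑ i, C (c i) * X i) = {x | x.rep ∈ LinearMap.ker L} := by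
    ext x
    simp [rationalZeros, L, Fintype.linearCombination_apply, mul_comm]
  have hker : Module.finrank F (LinearMap.ker L) = 2 := by
    have := Module.Dual.finrank_ker_add_one_of_ne_zero hL
    rw [Module.finrank_fin_fun] at this
    lia
  rw [hzeros, ncard_setOf_rep_mem, Projectivization.card_of_finrank_two F _ hker,
    Nat.card_eq_fintype_card]

lemma ncard_rationalZeros_le_of_forall_not_dvd (hf : f.IsHomogeneous (d + 1))
    (hdvd : ∀ l : MvPolynomial (Fin 3) F, l.IsHomogeneous 1 → ¬ l ∣ f) :
    (rationalZeros f).ncard ≤ d * (Fintype.card F + 1) := by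
  rcases (rationalZeros f).eq_empty_or_nonempty with hempty | ⟨x, hx⟩
  · simp [hempty]
  let a := x.rep
  have ha : a ≠ 0 := x.rep_nonzero
  obtain ⟨U, hU⟩ := Submodule.exists_isCompl (F ∙ a)
  have hfinrank : Module.finrank F U = 2 := by
    have := Submodule.finrank_add_eq_of_isCompl hU
    rw [finrank_span_singleton ha, Module.finrank_fin_fun] at this
    lia
  have := Fintype.ofFinite (ℙ F U)
  have hcard : Fintype.card (ℙ F U) = Fintype.card F + 1 := by
    simpa using Projectivization.card_of_finrank_two F U hfinrank
  have h0 (y : ℙ F U) : lineRestriction a y.rep f ≠ 0 := fun h => by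
    obtain ⟨l, hl, hlf⟩ := exists_linear_dvd_of_lineRestriction_eq_zero
      (linearIndependent_pair_rep ha hU y) hf h
    exact hdvd l hl hlf
  obtain ⟨y₀, hy₀⟩ := exists_rep_mem_ker (by lia) ((differentialAt a f).comp U.subtype)
  calc (rationalZeros f).ncard
      ≤ ∑ y : ℙ F U, (lineRestriction a y.rep f).natDegree + 1 :=
        ncard_rationalZeros_le_sum_natDegree hf ha hU h0
    _ ≤ ∑ _y : ℙ F U, d := Finset.sum_lt_sum
        (fun y _ => natDegree_lineRestriction_le hf hx)
        ⟨y₀, Finset.mem_univ _, natDegree_lineRestriction_lt hf hx hy₀ (h0 y₀)⟩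
    _ = d * (Fintype.card F + 1) := by simp [hcard, mul_comm]

theorem stmt_10_general {A : Type*} [CommRing A] [IsDomain A] [Algebra F A] {v : Fin 3 → A}
    (hv : LinearIndependent F v) (hf0 : f ≠ 0) (hf : f.IsHomogeneous (d + 1))
    (hfv : aeval v f = 0) : (rationalZeros f).ncard ≤ d * (Fintype.card F + 1) := by
  induction d generalizing f with
  | zero => exact absurd hfv (aeval_ne_zero_of_linearIndependent hv hf hf0)
  | succ d ih =>
    by_cases hdvd : ∃ l : MvPolynomial (Fin 3) F, l.IsHomogeneous 1 ∧ l ∣ f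
    · obtain ⟨l, hl, g, rfl⟩ := hdvd
      obtain ⟨hl0, hg0⟩ := mul_ne_zero_iff.mp hf0
      have hg : g.IsHomogeneous (d + 1) :=
        isHomogeneous_right_of_mul hl hl0 (add_comm 1 (d + 1) ▸ hf)
      have hgv : aeval v g = 0 := by
        rw [map_mul] at hfv
        exact (mul_eq_zero.mp hfv).resolve_left (aeval_ne_zero_of_linearIndependent hv hl hl0)
      calc (rationalZeros (l * g)).ncard
          ≤ (rationalZeros l).ncard + (rationalZeros g).ncard := by
            rw [rationalZeros_mul]; exact Set.ncard_union_le _ _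
        _ ≤ (Fintype.card F + 1) + d * (Fintype.card F + 1) :=
            add_le_add (ncard_rationalZeros_le_of_isHomogeneous_one hl hl0) (ih hg0 hg hgv)
        _ = (d + 1) * (Fintype.card F + 1) := by ring
    · exact ncard_rationalZeros_le_of_forall_not_dvd hf fun l hl hlf => hdvd ⟨l, hl, hlf⟩

end PlaneCurve

/-- A plane cubic over `F_q` passing through a degree-3 closed point not on any
`F_q`-rational line has at most `2q + 2` rational points. -/
theorem stmt_10 (q : ℕ) (hq : IsPrimePow q)
    (F E : Type) [Field F] [Fintype F] [Field E] [Fintype E] [Algebra F E]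
    (hF : Fintype.card F = q) (hE : Fintype.card E = q ^ 3)
    -- `v` represents a degree-3 closed point of `P²`: its three Frobenius conjugates are
    -- pairwise distinct and non-collinear (equivalently, linearly independent).
    (v : Fin 3 → E)
    (hv : LinearIndependent E ![v, fun i => v i ^ q, fun i => v i ^ q ^ 2]) :
    ∀ f : MvPolynomial (Fin 3) F, f ≠ 0 → f.IsHomogeneous 3 →
      MvPolynomial.aeval v f = 0 →
      {x : Projectivization F (Fin 3 → F) | MvPolynomial.eval x.rep f = 0}.ncard ≤ 2 * q + 2 := by
  intro f hf0 hf hfv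
  subst hF
  exact stmt_10_general (d := 2) (linearIndependent_of_frobenius (by
    convert hv with j; fin_cases j <;> simp)) hf0 hf hfv
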